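/- There exists ε₀ > 0 such that for every ε with 0 < ε < ε₀ the following holds in the ε-instance: if X' = (X'_1, X'_2, X'_3) is a complete EFX allocation with g_5 ∈ X'_3, g_6 ∉ X'_3, g_7 ∉ X'_3, g_3 ∈ X'_2 and g_6 ∈ X'_1, then v_1(X'_1)·v_2(X'_2)·v_3(X'_3) < (10 + 2ε^5)·(10 + ε)·10. -/

import Mathlib

open Finset

/-- Additive value of a bundle `S` under per-good valuation `v`. -/
noncomputable def val {G : Type*} (v : G → ℝ) (S : Finset G) : ℝ := ∑ g ∈ S, v g

/-- `X` is EFX: no agent `i` strongly envies agent `j`, i.e. for every good `g`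
in `X j`, `v_i(X_i) ≥ v_i(X_j \ {g})`. -/
def EFX {G : Type*} [DecidableEq G] (v : Fin 3 → G → ℝ) (X : Fin 3 → Finset G) : Prop :=
  ∀ i j : Fin 3, ∀ g ∈ X j, val (v i) (X j \ {g}) ≤ val (v i) (X i)

/-- The valuations of the ε-instance: agent `i`'s value for good `g_{k+1}` is `vE ε i k`. -/
noncomputable def vE (ε : ℝ) : Fin 3 → Fin 7 → ℝ :=
  ![![ε ^ 3 + 6 * ε ^ 5, 2 * ε ^ 5, 10 - ε ^ 3, ε ^ 3, 10 - 2 * ε ^ 3,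
      10 + 3 * ε ^ 5, ε ^ 5],
    ![ε, 0, 10 - ε ^ 2 + ε ^ 6, 2 * ε ^ 2, 10, 0, ε - ε ^ 2],
    ![0, 0, 0, 0, 10 - ε ^ 4, 10, 2 * ε ^ 4]]

/-- The partial allocation `X₁ = {g₂,g₃,g₄}`, `X₂ = {g₁,g₅}`, `X₃ = {g₆}` (goods are
`0`-indexed: good `g_{k+1}` is `k : Fin 7`). -/
def XT : Fin 3 → Finset (Fin 7) :=
  ![{1, 2, 3}, {0, 4}, {5}]

/-! In an EFX allocation nobody envies a proper sub-bundle. Agent 3 holds `g₅` but neither `g₆` nor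
`g₇`, so has at most `10 - ε⁴`, less than the value of `g₆`; hence agent 1 holds `g₆` alone. Agent 1
would then envy `{g₁, g₃}` inside a larger bundle, so agent 2 gets `g₁` only with `g₃` and nothing
else, and has at most `10 + ε + ε⁶` either way. The loss of order `ε⁴` for agent 3 outweighs the
gains of order `ε⁵` and `ε⁶` for the other two. -/

section Additive

variable {G : Type*} {S T : Finset G}

theorem val_nonneg {v : G → ℝ} (hv : ∀ g, 0 ≤ v g) : 0 ≤ val v S :=
  sum_nonneg fun g _ => hv g

theorem val_mono {v : G → ℝ} (hv : ∀ g, 0 ≤ v g) (h : S ⊆ T) : val v S ≤ val v T :=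
  sum_le_sum_of_subset_of_nonneg h fun g _ _ => hv g

theorem EFX.val_le_of_ssubset [DecidableEq G] {v : Fin 3 → G → ℝ} {X : Fin 3 → Finset G}
    (hX : EFX v X) {i j : Fin 3} (hv : ∀ g, 0 ≤ v i g) (h : S ⊂ X j) :
    val (v i) S ≤ val (v i) (X i) := by
  obtain ⟨g, hg, hgS⟩ := exists_of_ssubset h
  have hsub : S ⊆ X j \ {g} := subset_sdiff.2 ⟨h.subset, disjoint_singleton_right.2 hgS⟩
  exact (val_mono hv hsub).trans (hX i j g hg)

end Additive

section Instance

variable {ε : ℝ} {S : Finset (Fin 7)} {X : Fin 3 → Finset (Fin 7)}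

theorem vE_nonneg (hε : 0 ≤ ε) (hε' : ε ≤ 1) (i : Fin 3) (g : Fin 7) : 0 ≤ vE ε i g := by
  have h2 : ε ^ 2 ≤ ε := pow_le_of_le_one hε hε' two_ne_zero
  have h3 : ε ^ 3 ≤ 1 := pow_le_one₀ hε hε'
  have h4 : ε ^ 4 ≤ 1 := pow_le_one₀ hε hε'
  have h6 : 0 ≤ ε ^ 6 := by positivity
  fin_cases i <;> fin_cases g <;>
    simp only [vE, Fin.reduceFinMk, Fin.zero_eta, Fin.mk_one, Matrix.cons_val] <;>
    first | positivity | linarith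

theorem val_vE_two_le (hε : 0 ≤ ε) (hε' : ε ≤ 1) (h₅ : 5 ∉ S) (h₆ : 6 ∉ S) :
    val (vE ε 2) S ≤ 10 - ε ^ 4 := by
  have hsub : S ⊆ {0, 1, 2, 3, 4} := by
    intro g hg
    fin_cases g <;> simp_all
  calc val (vE ε 2) S ≤ val (vE ε 2) {0, 1, 2, 3, 4} := val_mono (vE_nonneg hε hε' 2) hsub
    _ = 10 - ε ^ 4 := by simp [_root_.val, vE]

theorem EFX.bundle_zero_eq_singleton (hε : 0 < ε) (hε' : ε ≤ 1) (hX : EFX (vE ε) X)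
    (h₅ : 5 ∉ X 2) (h₆ : 6 ∉ X 2) (h₅' : 5 ∈ X 0) : X 0 = {5} := by
  by_contra hne
  have hlt : {5} ⊂ X 0 := (singleton_subset_iff.2 h₅').ssubset_of_ne (Ne.symm hne)
  have henvy : val (vE ε 2) {5} ≤ val (vE ε 2) (X 2) :=
    hX.val_le_of_ssubset (vE_nonneg hε.le hε' 2) hlt
  have hfive : val (vE ε 2) {5} = 10 := by simp [_root_.val, vE]
  linarith [val_vE_two_le hε.le hε' h₅ h₆, pow_pos hε 4]

theorem EFX.bundle_one_eq_pair (hε : 0 < ε) (hε' : ε ≤ 1) (hX : EFX (vE ε) X)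
    (hX₀ : X 0 = {5}) (h₀ : 0 ∈ X 1) (h₂ : 2 ∈ X 1) : X 1 = {0, 2} := by
  by_contra hne
  have hlt : {0, 2} ⊂ X 1 :=
    (insert_subset h₀ (singleton_subset_iff.2 h₂)).ssubset_of_ne (Ne.symm hne)
  have henvy : val (vE ε 0) {0, 2} ≤ val (vE ε 0) (X 0) :=
    hX.val_le_of_ssubset (vE_nonneg hε.le hε' 0) hlt
  have hpair : val (vE ε 0) {0, 2} = 10 + 6 * ε ^ 5 := by
    rw [_root_.val, sum_pair (by decide)]
    simp only [vE, Matrix.cons_val]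
    ring
  have hfive : val (vE ε 0) {5} = 10 + 3 * ε ^ 5 := by simp [_root_.val, vE]
  rw [hX₀] at henvy
  linarith [pow_pos hε 5]

theorem EFX.val_vE_one_le (hε : 0 < ε) (hε' : ε ≤ 1) (hX : EFX (vE ε) X)
    (hX₀ : X 0 = {5}) (h₂ : 2 ∈ X 1) (h₄ : 4 ∉ X 1) :
    val (vE ε 1) (X 1) ≤ 10 + ε + ε ^ 6 := by
  by_cases h₀ : 0 ∈ X 1
  · calc val (vE ε 1) (X 1) = val (vE ε 1) {0, 2} := by
          rw [hX.bundle_one_eq_pair hε hε' hX₀ h₀ h₂]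
      _ = 10 + ε + ε ^ 6 - ε ^ 2 := by
          rw [_root_.val, sum_pair (by decide)]
          simp only [vE, Matrix.cons_val]
          ring
      _ ≤ 10 + ε + ε ^ 6 := sub_le_self _ (sq_nonneg ε)
  · have hsub : X 1 ⊆ {1, 2, 3, 5, 6} := by
      intro g hg
      fin_cases g <;> simp_all
    calc val (vE ε 1) (X 1) ≤ val (vE ε 1) {1, 2, 3, 5, 6} :=
          val_mono (vE_nonneg hε.le hε' 1) hsub
      _ = 10 + ε + ε ^ 6 := by
          simp only [_root_.val, vE, Matrix.cons_val, mem_insert, mem_singleton, Fin.reduceEq,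
            or_self, not_false_eq_true, sum_insert, sum_singleton]
          ring

theorem nash_bound_lt (hε : 0 < ε) (hε' : ε ≤ 1 / 2) :
    (10 + 3 * ε ^ 5) * (10 + ε + ε ^ 6) * (10 - ε ^ 4) < (10 + 2 * ε ^ 5) * (10 + ε) * 10 := by
  have hgain : 10 * (10 * ε + 11 * ε ^ 2 + 3 * ε ^ 7) < 100 := by
    have h2 : ε ^ 2 ≤ (1 / 2) ^ 2 := by gcongr
    have h7 : ε ^ 7 ≤ (1 / 2) ^ 7 := by gcongr
    linarith
  have hloss : 100 ≤ (10 + 3 * ε ^ 5) * (10 + ε + ε ^ 6) :=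
    calc (100 : ℝ) = (10 + 3 * 0) * (10 + 0 + 0) := by norm_num
      _ ≤ (10 + 3 * ε ^ 5) * (10 + ε + ε ^ 6) := by gcongr <;> positivity
  -- The two sides differ by `ε ^ 4` times the gap between the bounds above.
  linear_combination ε ^ 4 * (hgain.trans_le hloss)

theorem eps_instance_case_g5_to_agent3_general (hε : 0 < ε) (hε' : ε ≤ 1 / 2)
    (hdisj : ∀ i j, i ≠ j → Disjoint (X i) (X j)) (hX : EFX (vE ε) X)
    (h₄ : 4 ∈ X 2) (h₅ : 5 ∉ X 2) (h₆ : 6 ∉ X 2) (h₂ : 2 ∈ X 1) (h₅' : 5 ∈ X 0) :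
    val (vE ε 0) (X 0) * val (vE ε 1) (X 1) * val (vE ε 2) (X 2)
      < (10 + 2 * ε ^ 5) * (10 + ε) * 10 := by
  have hle : ε ≤ 1 := hε'.trans one_half_lt_one.le
  have hX₀ : X 0 = {5} := hX.bundle_zero_eq_singleton hε hle h₅ h₆ h₅'
  have h₄' : 4 ∉ X 1 := disjoint_right.1 (hdisj 1 2 (by decide)) h₄
  have hval₀ : val (vE ε 0) (X 0) = 10 + 3 * ε ^ 5 := by simp [hX₀, _root_.val, vE]
  have hval₁ : val (vE ε 1) (X 1) ≤ 10 + ε + ε ^ 6 := hX.val_vE_one_le hε hle hX₀ h₂ h₄'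
  have hval₂ : val (vE ε 2) (X 2) ≤ 10 - ε ^ 4 := val_vE_two_le hε.le hle h₅ h₆
  have hnonneg : 0 ≤ val (vE ε 2) (X 2) := val_nonneg (vE_nonneg hε.le hle 2)
  calc val (vE ε 0) (X 0) * val (vE ε 1) (X 1) * val (vE ε 2) (X 2)
      ≤ (10 + 3 * ε ^ 5) * (10 + ε + ε ^ 6) * (10 - ε ^ 4) := by
        rw [hval₀]
        gcongr
    _ < (10 + 2 * ε ^ 5) * (10 + ε) * 10 := nash_bound_lt hε hε'

end Instance

/-- For all sufficiently small `ε > 0`: any complete EFX allocation of the ε-instance with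
`g₅ ∈ X'₃`, `g₆ ∉ X'₃`, `g₇ ∉ X'₃`, `g₃ ∈ X'₂` and `g₆ ∈ X'₁` (goods `0`-indexed:
`4, 5, 6, 2, 5 : Fin 7`) has Nash-welfare product below `(10 + 2ε⁵)(10 + ε)·10`. -/
theorem eps_instance_case_g5_to_agent3 :
    ∃ ε₀ : ℝ, 0 < ε₀ ∧ ∀ ε : ℝ, 0 < ε → ε < ε₀ →
      ∀ X' : Fin 3 → Finset (Fin 7),
        (∀ i j, i ≠ j → Disjoint (X' i) (X' j)) →
        X' 0 ∪ X' 1 ∪ X' 2 = Finset.univ →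
        EFX (vE ε) X' →
        (4 : Fin 7) ∈ X' 2 → (5 : Fin 7) ∉ X' 2 → (6 : Fin 7) ∉ X' 2 →
        (2 : Fin 7) ∈ X' 1 → (5 : Fin 7) ∈ X' 0 →
        val (vE ε 0) (X' 0) * val (vE ε 1) (X' 1) * val (vE ε 2) (X' 2)
          < (10 + 2 * ε ^ 5) * (10 + ε) * 10 := by
  refine ⟨1 / 2, one_half_pos, fun ε hε hε' X' hdisj _ hX h₄ h₅ h₆ h₂ h₅' => ?_⟩
  exact eps_instance_case_g5_to_agent3_general hε hε'.le hdisj hX h₄ h₅ h₆ h₂ h₅'
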